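/- arXiv:1709.03219 — 4 statements merged into one kernel-verified Lean document; each statement's English description precedes it below -/
import Mathlib

section
/- For every m > 0 and every rapidity χ ∈ ℝ, the Lorentz boost in the third coordinate direction, acting on the mass shell as the map T_χ : ℝ³ → ℝ³ defined by T_χ(k₁, k₂, k₃) = (k₁, k₂, k₃·cosh χ + √(‖k‖² + m²)·sinh χ), is measure-preserving for the measure ω_m on ℝ³ given by Lebesgue measure with density k ↦ 1/√(‖k‖² + m²). That is, the pushforward of ω_m under T_χ equals ω_m. -/
open MeasureTheory Real

/-- The Lorentz boost of rapidity `χ` along the third axis, acting on the mass shell of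
mass `m` parametrized by the spatial momentum `k ∈ ℝ³`:
`T_χ(k₁, k₂, k₃) = (k₁, k₂, k₃·cosh χ + √(‖k‖² + m²)·sinh χ)`. -/
noncomputable def boostMap (m χ : ℝ) (k : EuclideanSpace ℝ (Fin 3)) :
    EuclideanSpace ℝ (Fin 3) :=
  WithLp.toLp 2 fun i => if i = 2 then k 2 * Real.cosh χ + Real.sqrt (‖k‖ ^ 2 + m ^ 2) * Real.sinh χ
           else k i

/-- The invariant mass-shell measure `ω_m`: Lebesgue measure on `ℝ³` with density
`k ↦ 1/√(‖k‖² + m²)`. -/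
noncomputable def massShellMeasure (m : ℝ) : Measure (EuclideanSpace ℝ (Fin 3)) :=
  (volume : Measure (EuclideanSpace ℝ (Fin 3))).withDensity
    (fun k => ENNReal.ofReal (1 / Real.sqrt (‖k‖ ^ 2 + m ^ 2)))

noncomputable def shellE (m : ℝ) (k : EuclideanSpace ℝ (Fin 3)) : ℝ := Real.sqrt (‖k‖ ^ 2 + m ^ 2)

lemma shellE_sq (m : ℝ) (k : EuclideanSpace ℝ (Fin 3)) :
    shellE m k ^ 2 = k 0 ^ 2 + k 1 ^ 2 + k 2 ^ 2 + m ^ 2 := by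
  rw [shellE, Real.sq_sqrt (by positivity), EuclideanSpace.norm_sq_eq]
  simp [Fin.sum_univ_three]

lemma shellE_pos (m : ℝ) (hm : 0 < m) (k : EuclideanSpace ℝ (Fin 3)) : 0 < shellE m k :=
  Real.sqrt_pos.2 (by positivity)

lemma boost_two (m χ : ℝ) (k : EuclideanSpace ℝ (Fin 3)) :
    boostMap m χ k 2 = k 2 * cosh χ + shellE m k * sinh χ := by
  simp [boostMap, shellE]

lemma boost_zero (m χ : ℝ) (k : EuclideanSpace ℝ (Fin 3)) : boostMap m χ k 0 = k 0 := by
  simp [boostMap]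

lemma boost_one (m χ : ℝ) (k : EuclideanSpace ℝ (Fin 3)) : boostMap m χ k 1 = k 1 := by
  simp [boostMap]

lemma boostE_pos (m χ : ℝ) (hm : 0 < m) (k : EuclideanSpace ℝ (Fin 3)) :
    0 < shellE m k * cosh χ + k 2 * sinh χ := by
  have h1 := shellE_sq m k
  have h2 := shellE_pos m hm k
  have h3 := Real.cosh_pos χ
  have h4 := Real.cosh_sq χ
  have h5 : |k 2 * sinh χ| < shellE m k * cosh χ := by
    apply abs_lt_of_sq_lt_sq _ (by positivity)
    rw [mul_pow, mul_pow, h1, h4]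
    nlinarith [sq_nonneg (k 0), sq_nonneg (k 1), sq_nonneg (k 2), sq_nonneg (sinh χ),
      mul_nonneg (sq_nonneg (k 0)) (sq_nonneg (sinh χ)),
      mul_nonneg (sq_nonneg (k 1)) (sq_nonneg (sinh χ)),
      mul_nonneg (sq_nonneg m) (sq_nonneg (sinh χ)), pow_pos hm 2]
  linarith [neg_abs_le (k 2 * sinh χ)]

lemma shellE_boost (m χ : ℝ) (hm : 0 < m) (k : EuclideanSpace ℝ (Fin 3)) :
    shellE m (boostMap m χ k) = shellE m k * cosh χ + k 2 * sinh χ := by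
  rw [← sq_eq_sq₀ (shellE_pos m hm _).le (boostE_pos m χ hm k).le, shellE_sq, boost_zero,
    boost_one, boost_two]
  have h1 := shellE_sq m k
  have h4 := Real.cosh_sq χ
  linear_combination (-1 : ℝ) * h1 + (k 2 ^ 2 - shellE m k ^ 2) * h4

lemma boost_inv (m χ : ℝ) (hm : 0 < m) (k : EuclideanSpace ℝ (Fin 3)) :
    boostMap m (-χ) (boostMap m χ k) = k := by
  ext i
  have h4 := Real.cosh_sq χ
  fin_cases i
  · simp [boost_zero]
  · simp [boost_one]
  · simp only [Fin.reduceFinMk, boost_two, shellE_boost m χ hm, Real.cosh_neg, Real.sinh_neg]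
    linear_combination (k 2) * h4

/-- The linear functional in the derivative of the boost. -/
noncomputable def boostFun (m χ : ℝ) (k : EuclideanSpace ℝ (Fin 3)) :
    EuclideanSpace ℝ (Fin 3) →L[ℝ] ℝ :=
  (cosh χ - 1) • EuclideanSpace.proj (2 : Fin 3) + (sinh χ / shellE m k) • innerSL ℝ k

noncomputable def boostDeriv (m χ : ℝ) (k : EuclideanSpace ℝ (Fin 3)) :
    EuclideanSpace ℝ (Fin 3) →L[ℝ] EuclideanSpace ℝ (Fin 3) :=
  ContinuousLinearMap.id ℝ _ + (boostFun m χ k).smulRight (EuclideanSpace.single (2 : Fin 3) 1)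

lemma boost_eq (m χ : ℝ) : boostMap m χ = fun k => k +
    ((cosh χ - 1) * k 2 + sinh χ * shellE m k) • EuclideanSpace.single (2 : Fin 3) (1 : ℝ) := by
  ext k i
  fin_cases i
  · simp [boost_zero]
  · simp [boost_one]
  · simp [boost_two]; ring

lemma hasFDerivAt_shellE (m : ℝ) (hm : 0 < m) (k : EuclideanSpace ℝ (Fin 3)) :
    HasFDerivAt (shellE m) ((1 / shellE m k) • innerSL ℝ k) k := by
  have h := ((hasStrictFDerivAt_norm_sq k).hasFDerivAt.add_const (m ^ 2)).sqrt
    (by positivity)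
  refine h.congr_fderiv ?_
  ext v
  have := shellE_pos m hm k
  simp [shellE]
  field_simp

lemma hasFDerivAt_boost (m χ : ℝ) (hm : 0 < m) (k : EuclideanSpace ℝ (Fin 3)) :
    HasFDerivAt (boostMap m χ) (boostDeriv m χ k) k := by
  rw [boost_eq]
  refine (hasFDerivAt_id k).add (HasFDerivAt.smul_const ?_ _)
  refine ((((EuclideanSpace.proj (2 : Fin 3) : EuclideanSpace ℝ (Fin 3) →L[ℝ] ℝ).hasFDerivAt).const_mul (cosh χ - 1)).add
    ((hasFDerivAt_shellE m hm k).const_mul (sinh χ))).congr_fderiv ?_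
  rw [boostFun, smul_smul, mul_one_div]

lemma boostDeriv_det (m χ : ℝ) (hm : 0 < m) (k : EuclideanSpace ℝ (Fin 3)) :
    (boostDeriv m χ k).det = shellE m (boostMap m χ k) / shellE m k := by
  have h : ((boostDeriv m χ k : EuclideanSpace ℝ (Fin 3) →L[ℝ] EuclideanSpace ℝ (Fin 3)) :
      EuclideanSpace ℝ (Fin 3) →ₗ[ℝ] EuclideanSpace ℝ (Fin 3)) =
      LinearMap.transvection (boostFun m χ k : EuclideanSpace ℝ (Fin 3) →ₗ[ℝ] ℝ) (EuclideanSpace.single (2 : Fin 3) 1) := by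
    ext v
    simp [boostDeriv, LinearMap.transvection.apply]
  have := shellE_pos m hm k
  rw [ContinuousLinearMap.det, h, LinearMap.transvection.det, shellE_boost m χ hm]
  simp [boostFun, EuclideanSpace.inner_single_right]
  field_simp
  ring

/-- For every `m > 0` and every rapidity `χ`, the Lorentz boost along the third axis is
measure-preserving for the invariant mass-shell measure `ω_m`: the pushforward of `ω_m`
under `T_χ` equals `ω_m`. -/
theorem boost_measurePreserving (m : ℝ) (hm : 0 < m) (χ : ℝ) :
    Measure.map (boostMap m χ) (massShellMeasure m) = massShellMeasure m := by
  have hd := hasFDerivAt_boost m χ hm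
  have hmeas : Measurable (boostMap m χ) :=
    (continuous_iff_continuousAt.2 fun k => (hd k).continuousAt).measurable
  have hinj : Function.Injective (boostMap m χ) :=
    Function.LeftInverse.injective (boost_inv m χ hm)
  have hsurj : Function.Surjective (boostMap m χ) := fun k =>
    ⟨boostMap m (-χ) k, by simpa using boost_inv m (-χ) hm k⟩
  ext s hs
  rw [Measure.map_apply hmeas hs, massShellMeasure, withDensity_apply _ (hmeas hs),
    withDensity_apply _ hs, ← lintegral_indicator hs, ← lintegral_indicator (hmeas hs)]
  have key := lintegral_image_eq_lintegral_abs_det_fderiv_mul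
    (volume : Measure (EuclideanSpace ℝ (Fin 3))) MeasurableSet.univ
    (fun x _ => (hd x).hasFDerivWithinAt) hinj.injOn
    (s.indicator fun k => ENNReal.ofReal (1 / Real.sqrt (‖k‖ ^ 2 + m ^ 2)))
  rw [Set.image_univ, hsurj.range_eq, Measure.restrict_univ] at key
  rw [key]
  refine lintegral_congr fun k => ?_
  have h1 := shellE_pos m hm k
  have h2 := shellE_pos m hm (boostMap m χ k)
  by_cases hk : boostMap m χ k ∈ s
  · rw [Set.indicator_of_mem hk, Set.indicator_of_mem (by exact hk), boostDeriv_det m χ hm,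
      ← ENNReal.ofReal_mul (abs_nonneg _), abs_of_pos (by positivity)]
    congr 1
    change 1 / shellE m k = _ * (1 / shellE m (boostMap m χ k))
    field_simp
  · rw [Set.indicator_of_notMem hk, Set.indicator_of_notMem (by exact hk), mul_zero]
end

section
/- Let m > 0 and let μ be a finite Borel measure on ℝ³ that is invariant under the boost maps T_χ for every χ ∈ ℝ, i.e., the pushforward of μ under T_χ equals μ for all χ. Then μ = 0. In particular, there is no probability measure on the mass shell of mass m that is invariant under all Lorentz boosts along the third axis. -/
open MeasureTheory Real

lemma boostMap_cont (m χ : ℝ) : Continuous (boostMap m χ) := by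
  unfold boostMap
  refine (PiLp.continuous_toLp 2 _).comp (continuous_pi fun i => ?_)
  split_ifs <;> fun_prop

lemma boostMap_two (m χ : ℝ) (k : EuclideanSpace ℝ (Fin 3)) :
    boostMap m χ k 2 = k 2 * Real.cosh χ + Real.sqrt (‖k‖ ^ 2 + m ^ 2) * Real.sinh χ := by
  simp [boostMap]

lemma boost_tendsto (a E : ℝ) (h : |a| < E) :
    Filter.Tendsto (fun n : ℕ => a * Real.cosh n + E * Real.sinh n) Filter.atTop Filter.atTop := by
  obtain ⟨h1, h2⟩ := abs_lt.1 h
  have hb : ∀ n : ℕ, (a + E) / 2 * Real.exp n + (a - E) / 2 ≤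
      a * Real.cosh n + E * Real.sinh n := by
    intro n
    rw [Real.cosh_eq, Real.sinh_eq]
    have : Real.exp (-(n : ℝ)) ≤ 1 := Real.exp_le_one_iff.2 (by simp)
    nlinarith
  refine Filter.tendsto_atTop_mono hb ?_
  refine Filter.tendsto_atTop_add_const_right _ _ ?_
  exact (Real.tendsto_exp_atTop.comp tendsto_natCast_atTop_atTop).const_mul_atTop (by linarith)

lemma abs_lt_energy (m : ℝ) (hm : 0 < m) (k : EuclideanSpace ℝ (Fin 3)) :
    |k 2| < Real.sqrt (‖k‖ ^ 2 + m ^ 2) := by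
  have h1 : |k 2| ≤ ‖k‖ := PiLp.norm_apply_le k 2
  refine lt_of_le_of_lt h1 (Real.lt_sqrt_of_sq_lt ?_)
  have := pow_pos hm 2
  linarith

/-- For `m > 0`, any finite Borel measure on `ℝ³` that is invariant under the boost maps
`T_χ` for every rapidity `χ` must be the zero measure.  In particular there is no
probability measure on the mass shell of mass `m` invariant under all Lorentz boosts
along the third axis. -/
theorem finite_boost_invariant_measure_eq_zero (m : ℝ) (hm : 0 < m)
    (μ : Measure (EuclideanSpace ℝ (Fin 3))) [IsFiniteMeasure μ]
    (hinv : ∀ χ : ℝ, Measure.map (boostMap m χ) μ = μ) :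
    μ = 0 := by
  let f : EuclideanSpace ℝ (Fin 3) → ℝ := fun k => (1 + Real.exp (k 2))⁻¹
  have hpos : ∀ k, 0 < f k := fun k => by positivity
  have hle : ∀ k, f k ≤ 1 := fun k => inv_le_one_of_one_le₀ (by linarith [Real.exp_pos (k 2)])
  have hcont : Continuous f := by
    refine Continuous.inv₀ (by fun_prop) fun k => ?_
    positivity
  have hbd : ∀ k, ‖f k‖ ≤ 1 := fun k => by
    rw [Real.norm_of_nonneg (hpos k).le]; exact hle k
  have hint : Integrable f μ :=
    (integrable_const (1 : ℝ)).mono' hcont.aestronglyMeasurable (Filter.Eventually.of_forall hbd)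
  have hlim : Filter.Tendsto (fun n : ℕ => ∫ k, f (boostMap m n k) ∂μ) Filter.atTop
      (nhds (∫ _, (0 : ℝ) ∂μ)) := by
    refine tendsto_integral_of_dominated_convergence (fun _ => (1 : ℝ))
      (fun n => (hcont.comp (boostMap_cont m n)).aestronglyMeasurable) (integrable_const _)
      (fun n => Filter.Eventually.of_forall fun k => hbd _)
      (Filter.Eventually.of_forall fun k => ?_)
    refine Filter.Tendsto.inv_tendsto_atTop ?_
    refine Filter.tendsto_atTop_add_const_left _ _ (Real.tendsto_exp_atTop.comp ?_)
    simp only [boostMap_two]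
    exact boost_tendsto _ _ (abs_lt_energy m hm k)
  have heq : ∀ n : ℕ, ∫ k, f (boostMap m n k) ∂μ = ∫ k, f k ∂μ := fun n => by
    rw [← integral_map (boostMap_cont m n).aemeasurable hcont.aestronglyMeasurable, hinv]
  simp only [heq, integral_zero] at hlim
  have h0 : ∫ k, f k ∂μ = 0 := tendsto_nhds_unique tendsto_const_nhds hlim
  rw [integral_eq_zero_iff_of_nonneg (fun k => (hpos k).le) hint] at h0
  rw [← ae_eq_bot, ← Filter.empty_mem_iff_bot]
  filter_upwards [h0] with k hk
  exact (hpos k).ne' hk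
end

section
/- Let H be a complex Hilbert space, (Γ, μ) a measure space, f : Γ → H an almost everywhere strongly measurable function with γ ↦ ‖f γ‖² integrable and ∫ ‖f γ‖² dμ(γ) = 1, and let ψ ∈ H be a unit vector such that ∫ |⟪ψ, f γ⟫|² dμ(γ) = 1. Then for μ-almost every γ there exists c ∈ ℂ such that f γ = c • ψ. (Purity of the ensemble density operator ρ̄ = ∫ |f γ⟩⟨f γ| dμ forces almost all the vectors f γ to lie in a single ray.) -/
open MeasureTheory
open scoped InnerProductSpace

/-- Purity of the ensemble density operator forces almost all vectors into a single ray: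
if `f : Γ → H` has `∫ ‖f γ‖² dμ = 1` and there is a unit vector `ψ` with
`∫ |⟪ψ, f γ⟫|² dμ = 1`, then for `μ`-almost every `γ` there is `c ∈ ℂ` with `f γ = c • ψ`. -/
theorem pure_ensemble_vectors_in_ray
    {H : Type*} [NormedAddCommGroup H] [InnerProductSpace ℂ H] [CompleteSpace H]
    {Γ : Type*} [MeasurableSpace Γ] (μ : Measure Γ)
    (f : Γ → H) (hf_meas : AEStronglyMeasurable f μ)
    (hf_int : Integrable (fun γ => ‖f γ‖ ^ 2) μ)
    (hf_norm : ∫ γ, ‖f γ‖ ^ 2 ∂μ = 1)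
    (ψ : H) (hψ : ‖ψ‖ = 1)
    (hpure : ∫ γ, ‖⟪ψ, f γ⟫_ℂ‖ ^ 2 ∂μ = 1) :
    ∀ᵐ γ ∂μ, ∃ c : ℂ, f γ = c • ψ := by
  have hg : Integrable (fun γ => ‖⟪ψ, f γ⟫_ℂ‖ ^ 2) μ := integrable_of_integral_eq_one hpure
  have hle : ∀ γ, ‖⟪ψ, f γ⟫_ℂ‖ ≤ ‖f γ‖ := fun γ => by
    simpa [hψ] using norm_inner_le_norm (𝕜 := ℂ) ψ (f γ)
  have h0 : ∫ γ, (‖f γ‖ ^ 2 - ‖⟪ψ, f γ⟫_ℂ‖ ^ 2) ∂μ = 0 := by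
    rw [integral_sub hf_int hg, hf_norm, hpure, sub_self]
  have hnn : 0 ≤ fun γ => ‖f γ‖ ^ 2 - ‖⟪ψ, f γ⟫_ℂ‖ ^ 2 := fun γ =>
    sub_nonneg.2 (pow_le_pow_left₀ (norm_nonneg _) (hle γ) 2)
  have hψ0 : ψ ≠ 0 := by
    rintro rfl
    simp at hψ
  filter_upwards [(integral_eq_zero_iff_of_nonneg hnn (hf_int.sub hg)).1 h0] with γ hγ
  have h1 : ‖f γ‖ ^ 2 = ‖⟪ψ, f γ⟫_ℂ‖ ^ 2 := sub_eq_zero.1 hγ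
  have h2 : ‖f γ‖ = ‖⟪ψ, f γ⟫_ℂ‖ :=
    (pow_left_inj₀ (norm_nonneg _) (norm_nonneg _) two_ne_zero).1 h1
  by_cases hz : f γ = 0
  · exact ⟨0, by simp [hz]⟩
  · obtain ⟨r, -, hr⟩ := (norm_inner_eq_norm_iff (𝕜 := ℂ) hψ0 hz).1 (by rw [hψ, one_mul, h2])
    exact ⟨r, hr⟩
end

section
/- Let H be a complex Hilbert space, (Γ, μ) a measure space, f : Γ → H an almost everywhere strongly measurable function with γ ↦ ‖f γ‖² integrable, and let ψ ∈ H be a unit vector such that for every φ ∈ H, ∫ |⟪φ, f γ⟫|² dμ(γ) = |⟪φ, ψ⟫|². Then for μ-almost every γ there exists c ∈ ℂ such that f γ = c • ψ. -/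
open MeasureTheory
open scoped InnerProductSpace

/-- If the ensemble density operator `∫ |f γ⟩⟨f γ| dμ` equals, in the weak
(matrix-element) sense, the pure-state projection onto a unit vector `ψ` — i.e.
`∫ |⟪φ, f γ⟫|² dμ = |⟪φ, ψ⟫|²` for every `φ` — then for `μ`-almost every `γ` there is
`c ∈ ℂ` with `f γ = c • ψ`. -/
theorem weakly_pure_ensemble_vectors_in_ray
    {H : Type*} [NormedAddCommGroup H] [InnerProductSpace ℂ H] [CompleteSpace H]
    {Γ : Type*} [MeasurableSpace Γ] (μ : Measure Γ)
    (f : Γ → H) (hf_meas : AEStronglyMeasurable f μ)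
    (hf_int : Integrable (fun γ => ‖f γ‖ ^ 2) μ)
    (ψ : H) (hψ : ‖ψ‖ = 1)
    (hpure : ∀ φ : H, ∫ γ, ‖⟪φ, f γ⟫_ℂ‖ ^ 2 ∂μ = ‖⟪φ, ψ⟫_ℂ‖ ^ 2) :
    ∀ᵐ γ ∂μ, ∃ c : ℂ, f γ = c • ψ := by
  have hψψ : ⟪ψ, ψ⟫_ℂ = 1 := by
    rw [inner_self_eq_norm_sq_to_K, hψ]; simp
  have hint : ∀ φ : H, Integrable (fun γ => ‖⟪φ, f γ⟫_ℂ‖ ^ 2) μ := by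
    intro φ
    refine (hf_int.const_mul (‖φ‖ ^ 2)).mono'
      (((aestronglyMeasurable_const (b := φ)).inner hf_meas).norm.pow 2) ?_
    filter_upwards with γ
    rw [Real.norm_of_nonneg (by positivity), ← mul_pow]
    gcongr
    exact norm_inner_le_norm _ _
  have key : ∀ φ : H, ⟪φ, ψ⟫_ℂ = 0 → ∀ᵐ γ ∂μ, ⟪φ, f γ⟫_ℂ = 0 := by
    intro φ h
    have h1 : ∫ γ, ‖⟪φ, f γ⟫_ℂ‖ ^ 2 ∂μ = 0 := by rw [hpure φ, h]; simp
    have h2 := (integral_eq_zero_iff_of_nonneg (fun γ => by positivity) (hint φ)).mp h1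
    filter_upwards [h2] with γ hγ
    simpa using hγ
  have hg : AEStronglyMeasurable (fun γ => f γ - ⟪ψ, f γ⟫_ℂ • ψ) μ :=
    hf_meas.sub (((aestronglyMeasurable_const (b := ψ)).inner hf_meas).smul
      aestronglyMeasurable_const)
  obtain ⟨t, ht, hgt⟩ := hg.isSeparable_ae_range
  have h0 := ae_eq_zero_of_forall_dual_of_isSeparable ℂ ht (f := fun γ => f γ - ⟪ψ, f γ⟫_ℂ • ψ)
    (fun c => ?_) hgt
  · filter_upwards [h0] with γ hγ
    exact ⟨⟪ψ, f γ⟫_ℂ, sub_eq_zero.mp hγ⟩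
  · obtain ⟨v, rfl⟩ := (InnerProductSpace.toDual ℂ H).surjective c
    have hv := key (v - ⟪ψ, v⟫_ℂ • ψ) (by
      rw [inner_sub_left, inner_smul_left, hψψ, inner_conj_symm]; simp)
    filter_upwards [hv] with γ hγ
    rw [inner_sub_left, inner_smul_left, inner_conj_symm] at hγ
    simp only [InnerProductSpace.toDual_apply_apply, inner_sub_right, inner_smul_right,
      Pi.zero_apply]
    rw [← hγ]; ring
end
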